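/- Let Z ∈ ℝ^{n×m}, e ∈ ℝ^n, U, Û ∈ ℝ^{m×q}, g, ĝ ∈ ℝ^q, and set y = ZUg + e, Δ = Ûĝ − Ug, Δ_u = Û − U, Δ_g = ĝ − g. Let S = {(i,j) : U(i,j) ≠ 0} and suppose S has at most s elements. Let λ > 0, α > 0, and τ_u, τ_g ≥ 0. Assume: (i) n⁻¹‖y − ZÛĝ‖₂² + λ‖Û‖₁ ≤ n⁻¹‖y − ZUg‖₂² + λ‖U‖₁; (ii) ⟨n⁻¹Zᵀe, Δ_u·ĝ⟩ ≤ λ‖Δ_u‖₁/4 and ⟨n⁻¹Zᵀe, U·Δ_g⟩ ≤ λ‖Δ_g‖₁/4; (iii) n⁻¹‖ZΔ‖₂² ≥ (α/2)·‖Δ‖₂²; (iv) ‖Δ_u‖_F ≤ τ_u·‖Δ‖₂ and ‖Δ_g‖₂ ≤ τ_g·‖Δ‖₂. Then ‖Δ‖₂ ≤ λ(√q·τ_g + 3√s·τ_u)/α and n⁻¹‖ZΔ‖₂² ≤ λ²(√q·τ_g + 3√s·τ_u)²/(2α). -/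

import Mathlib

open scoped BigOperators
open Matrix

/-- Euclidean norm of a vector. -/
noncomputable def l2 {ι : Type*} [Fintype ι] (v : ι → ℝ) : ℝ :=
  Real.sqrt (∑ i, v i ^ 2)

/-- Euclidean inner product of two vectors. -/
def inn {ι : Type*} [Fintype ι] (u v : ι → ℝ) : ℝ :=
  ∑ i, u i * v i

/-- Entrywise ℓ1 norm of a matrix. -/
def l1 {m q : ℕ} (M : Matrix (Fin m) (Fin q) ℝ) : ℝ :=
  ∑ i, ∑ j, |M i j|

/-- Frobenius norm of a matrix. -/
noncomputable def frob {m q : ℕ} (M : Matrix (Fin m) (Fin q) ℝ) : ℝ :=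
  Real.sqrt (∑ i, ∑ j, (M i j) ^ 2)

/-!
Comparing the objective at the estimate and at the truth and expanding the square bounds the
prediction error by the correlation of the noise with `Δ` plus the drop of the penalty. Splitting
`Δ` into the errors of the two factors, the deviation bounds cost half an `ℓ¹` norm of each. For
the error of `U` this half is absorbed by the penalty off the support of `U`, where the penalty
can only grow, so only the error on the `s` support coordinates survives. Cauchy–Schwarz and the
perturbation bounds then make the prediction error at most linear in `‖Δ‖₂`, while the restricted
eigenvalue condition makes it at least quadratic.
-/

lemma sum_norm_sub_sum_norm_le_of_eq_zero_off {ι E : Type*} [Fintype ι] [DecidableEq ι]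
    [SeminormedAddCommGroup E] (K : Finset ι) (u v : ι → E) (hu : ∀ i ∉ K, u i = 0) :
    ∑ i, ‖u i‖ - ∑ i, ‖v i‖ ≤ ∑ i ∈ K, ‖v i - u i‖ - ∑ i ∈ Kᶜ, ‖v i - u i‖ := by
  have on_K : ∑ i ∈ K, ‖u i‖ - ∑ i ∈ K, ‖v i‖ ≤ ∑ i ∈ K, ‖v i - u i‖ := by
    rw [← Finset.sum_sub_distrib]
    exact Finset.sum_le_sum fun i _ => norm_sub_rev (v i) (u i) ▸ norm_sub_norm_le (u i) (v i)
  have u_off_K : ∑ i ∈ Kᶜ, ‖u i‖ = 0 :=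
    Finset.sum_eq_zero fun i hi => by rw [hu i (Finset.mem_compl.mp hi), norm_zero]
  have v_off_K : ∑ i ∈ Kᶜ, ‖v i - u i‖ = ∑ i ∈ Kᶜ, ‖v i‖ :=
    Finset.sum_congr rfl fun i hi => by rw [hu i (Finset.mem_compl.mp hi), sub_zero]
  rw [← Finset.sum_add_sum_compl K fun i => ‖u i‖, ← Finset.sum_add_sum_compl K fun i => ‖v i‖]
  linarith

lemma le_div_and_le_sq_div_of_mul_sq_le_of_le_mul {a b x w : ℝ} (ha : 0 < a) (hb : 0 ≤ b)
    (hx : 0 ≤ x) (hlower : a * x ^ 2 ≤ w) (hupper : w ≤ b * x) :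
    x ≤ b / a ∧ w ≤ b ^ 2 / a := by
  have hxb : x ≤ b / a := by
    rw [le_div_iff₀' ha]
    rcases hx.eq_or_lt with rfl | hx_pos
    · simpa using hb
    · refine le_of_mul_le_mul_right ?_ hx_pos
      linarith
  refine ⟨hxb, hupper.trans ?_⟩
  calc b * x ≤ b * (b / a) := by gcongr
    _ = b ^ 2 / a := by ring

lemma mulVec_sub_mulVec {ι κ R : Type*} [Fintype κ] [NonUnitalNonAssocRing R]
    (A B : Matrix ι κ R) (x y : κ → R) :
    A *ᵥ x - B *ᵥ y = (A - B) *ᵥ x + B *ᵥ (x - y) := by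
  rw [sub_mulVec, mulVec_sub, sub_add_sub_cancel]

section Norms

variable {ι κ : Type*} [Fintype ι] [Fintype κ]

lemma l2_nonneg (v : ι → ℝ) : 0 ≤ l2 v := Real.sqrt_nonneg _

lemma l2_sq (v : ι → ℝ) : l2 v ^ 2 = ∑ i, v i ^ 2 :=
  Real.sq_sqrt (Finset.sum_nonneg fun _ _ => sq_nonneg _)

lemma l2_sub_sq (v w : ι → ℝ) : l2 (v - w) ^ 2 = l2 v ^ 2 - 2 * inn v w + l2 w ^ 2 := by
  simp only [l2_sq, inn, Pi.sub_apply, sub_sq, Finset.sum_add_distrib, Finset.sum_sub_distrib,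
    Finset.mul_sum, mul_assoc]

lemma inn_add_right (u v w : ι → ℝ) : inn u (v + w) = inn u v + inn u w :=
  dotProduct_add u v w

lemma inn_smul_transpose_mulVec (c : ℝ) (Z : Matrix ι κ ℝ) (e : ι → ℝ) (v : κ → ℝ) :
    inn (c • Zᵀ *ᵥ e) v = c * inn e (Z *ᵥ v) := by
  change (c • Zᵀ *ᵥ e) ⬝ᵥ v = c * (e ⬝ᵥ Z *ᵥ v)
  rw [smul_dotProduct, mulVec_transpose, dotProduct_mulVec, smul_eq_mul]

lemma sum_abs_le_sqrt_card_mul_l2 (K : Finset ι) (v : ι → ℝ) :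
    ∑ i ∈ K, |v i| ≤ √K.card * l2 v := by
  calc ∑ i ∈ K, |v i| ≤ √K.card * √(∑ i ∈ K, v i ^ 2) := by
        simpa using Real.sum_mul_le_sqrt_mul_sqrt K (fun _ => 1) fun i => |v i|
    _ ≤ √K.card * l2 v := by
        unfold l2
        gcongr
        exact Finset.subset_univ K

end Norms

section Penalty

variable {m q : ℕ}

lemma l1_eq_sum_prod (M : Matrix (Fin m) (Fin q) ℝ) :
    l1 M = ∑ ij : Fin m × Fin q, |M ij.1 ij.2| :=
  (Fintype.sum_prod_type' fun i j => |M i j|).symm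

lemma frob_eq_l2 (M : Matrix (Fin m) (Fin q) ℝ) :
    frob M = l2 fun ij : Fin m × Fin q => M ij.1 ij.2 :=
  congrArg Real.sqrt (Fintype.sum_prod_type' fun i j => M i j ^ 2).symm

lemma l1_sub_l1_add_mul_l1_sub_le {U V : Matrix (Fin m) (Fin q) ℝ} {s : ℕ}
    (hU : (Finset.univ.filter fun ij : Fin m × Fin q => U ij.1 ij.2 ≠ 0).card ≤ s)
    {c : ℝ} (hc : |c| ≤ 1) :
    l1 U - l1 V + c * l1 (V - U) ≤ (1 + c) * (√s * frob (V - U)) := by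
  obtain ⟨hc_lower, hc_upper⟩ := abs_le.mp hc
  set K := Finset.univ.filter fun ij : Fin m × Fin q => U ij.1 ij.2 ≠ 0
  set onK := ∑ ij ∈ K, |(V - U) ij.1 ij.2|
  set offK := ∑ ij ∈ Kᶜ, |(V - U) ij.1 ij.2|
  have split : l1 (V - U) = onK + offK := by
    rw [l1_eq_sum_prod, Finset.sum_add_sum_compl]
  have penalty_drop : l1 U - l1 V ≤ onK - offK := by
    rw [l1_eq_sum_prod, l1_eq_sum_prod]
    exact sum_norm_sub_sum_norm_le_of_eq_zero_off K (fun ij => U ij.1 ij.2)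
      (fun ij => V ij.1 ij.2) fun ij hij => by simpa [K] using hij
  have offK_nonneg : 0 ≤ offK := Finset.sum_nonneg fun _ _ => abs_nonneg _
  calc l1 U - l1 V + c * l1 (V - U) ≤ (1 + c) * onK - (1 - c) * offK := by
        rw [split]
        linarith
    _ ≤ (1 + c) * onK := sub_le_self _ (mul_nonneg (sub_nonneg.mpr hc_upper) offK_nonneg)
    _ ≤ (1 + c) * (√K.card * frob (V - U)) := by
        rw [frob_eq_l2]
        exact mul_le_mul_of_nonneg_left (sum_abs_le_sqrt_card_mul_l2 K _) (by linarith)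
    _ ≤ (1 + c) * (√s * frob (V - U)) := by
        have : 0 ≤ 1 + c := by linarith
        have : 0 ≤ frob (V - U) := Real.sqrt_nonneg _
        gcongr

end Penalty

section PredictionError

variable {ι : Type*} [Fintype ι]

lemma prediction_error_le_of_objective_le {κ : Type*} [Fintype κ] {Z : Matrix ι κ ℝ}
    {e : ι → ℝ} {b bhat : κ → ℝ} {c r rhat : ℝ}
    (h : c * l2 (Z *ᵥ b + e - Z *ᵥ bhat) ^ 2 + rhat ≤ c * l2 (Z *ᵥ b + e - Z *ᵥ b) ^ 2 + r) :
    c * l2 (Z *ᵥ (bhat - b)) ^ 2 ≤ 2 * inn (c • Zᵀ *ᵥ e) (bhat - b) + (r - rhat) := by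
  have residual : Z *ᵥ b + e - Z *ᵥ bhat = e - Z *ᵥ (bhat - b) := by
    rw [mulVec_sub]
    abel
  rw [residual, add_sub_cancel_left, l2_sub_sq] at h
  rw [inn_smul_transpose_mulVec]
  linarith

lemma prediction_error_le_of_l1_objective_le {m q : ℕ} {Z : Matrix ι (Fin m) ℝ} {e : ι → ℝ}
    {U Uhat : Matrix (Fin m) (Fin q) ℝ} {g ghat : Fin q → ℝ} {c lam : ℝ} {s : ℕ}
    (hU : (Finset.univ.filter fun ij : Fin m × Fin q => U ij.1 ij.2 ≠ 0).card ≤ s)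
    (hlam : 0 ≤ lam)
    (hbasic : c * l2 (Z *ᵥ (U *ᵥ g) + e - Z *ᵥ (Uhat *ᵥ ghat)) ^ 2 + lam * l1 Uhat ≤
      c * l2 (Z *ᵥ (U *ᵥ g) + e - Z *ᵥ (U *ᵥ g)) ^ 2 + lam * l1 U)
    (hdevU : inn (c • Zᵀ *ᵥ e) ((Uhat - U) *ᵥ ghat) ≤ lam * l1 (Uhat - U) / 4)
    (hdevg : inn (c • Zᵀ *ᵥ e) (U *ᵥ (ghat - g)) ≤ lam * (∑ j, |(ghat - g) j|) / 4) :
    c * l2 (Z *ᵥ (Uhat *ᵥ ghat - U *ᵥ g)) ^ 2 ≤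
      lam / 2 * (√q * l2 (ghat - g) + 3 * √s * frob (Uhat - U)) := by
  have hg : ∑ j, |(ghat - g) j| ≤ √q * l2 (ghat - g) := by
    simpa using sum_abs_le_sqrt_card_mul_l2 Finset.univ (ghat - g)
  have hUhat : l1 U - l1 Uhat + 1 / 2 * l1 (Uhat - U) ≤ (1 + 1 / 2) * (√s * frob (Uhat - U)) :=
    l1_sub_l1_add_mul_l1_sub_le hU (by norm_num [abs_le])
  calc c * l2 (Z *ᵥ (Uhat *ᵥ ghat - U *ᵥ g)) ^ 2
      ≤ 2 * inn (c • Zᵀ *ᵥ e) (Uhat *ᵥ ghat - U *ᵥ g) + (lam * l1 U - lam * l1 Uhat) :=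
        prediction_error_le_of_objective_le hbasic
    _ ≤ 2 * (lam * l1 (Uhat - U) / 4 + lam * (∑ j, |(ghat - g) j|) / 4) +
          (lam * l1 U - lam * l1 Uhat) := by
        rw [mulVec_sub_mulVec, inn_add_right]
        gcongr
    _ = lam / 2 * (∑ j, |(ghat - g) j| +
          2 * (l1 U - l1 Uhat + 1 / 2 * l1 (Uhat - U))) := by ring
    _ ≤ lam / 2 * (√q * l2 (ghat - g) + 2 * ((1 + 1 / 2) * (√s * frob (Uhat - U)))) := by
        gcongr
    _ = lam / 2 * (√q * l2 (ghat - g) + 3 * √s * frob (Uhat - U)) := by ring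

end PredictionError

/-- **Deterministic error bound for the regularized estimator.** Under the
basic inequality (i), the deviation bounds (ii), the restricted eigenvalue
condition (iii), and the perturbation bounds (iv), the estimation and
in-sample prediction errors satisfy
`‖Δ‖₂ ≤ λ(√q·τ_g + 3√s·τ_u)/α` and `n⁻¹‖ZΔ‖₂² ≤ λ²(√q·τ_g + 3√s·τ_u)²/(2α)`. -/
theorem deterministic_error_bound {n m q : ℕ}
    (Z : Matrix (Fin n) (Fin m) ℝ) (e : Fin n → ℝ)
    (U Uhat : Matrix (Fin m) (Fin q) ℝ) (g ghat : Fin q → ℝ)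
    (y : Fin n → ℝ) (hy : y = Z.mulVec (U.mulVec g) + e)
    (Δ : Fin m → ℝ) (hΔ : Δ = Uhat.mulVec ghat - U.mulVec g)
    (Δu : Matrix (Fin m) (Fin q) ℝ) (hΔu : Δu = Uhat - U)
    (Δg : Fin q → ℝ) (hΔg : Δg = ghat - g)
    (s : ℕ)
    (hS : (Finset.univ.filter fun ij : Fin m × Fin q => U ij.1 ij.2 ≠ 0).card ≤ s)
    (lam α τu τg : ℝ) (hlam : 0 < lam) (hα : 0 < α) (hτu : 0 ≤ τu) (hτg : 0 ≤ τg)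
    (hbasic : (n : ℝ)⁻¹ * (l2 (y - Z.mulVec (Uhat.mulVec ghat))) ^ 2 + lam * l1 Uhat ≤
      (n : ℝ)⁻¹ * (l2 (y - Z.mulVec (U.mulVec g))) ^ 2 + lam * l1 U)
    (hdev1 : inn ((n : ℝ)⁻¹ • Zᵀ.mulVec e) (Δu.mulVec ghat) ≤ lam * l1 Δu / 4)
    (hdev2 : inn ((n : ℝ)⁻¹ • Zᵀ.mulVec e) (U.mulVec Δg) ≤ lam * (∑ i, |Δg i|) / 4)
    (hre : (n : ℝ)⁻¹ * (l2 (Z.mulVec Δ)) ^ 2 ≥ α / 2 * (l2 Δ) ^ 2)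
    (hpu : frob Δu ≤ τu * l2 Δ) (hpg : l2 Δg ≤ τg * l2 Δ) :
    l2 Δ ≤ lam * (Real.sqrt q * τg + 3 * Real.sqrt s * τu) / α ∧
    (n : ℝ)⁻¹ * (l2 (Z.mulVec Δ)) ^ 2 ≤
      lam ^ 2 * (Real.sqrt q * τg + 3 * Real.sqrt s * τu) ^ 2 / (2 * α) := by
  subst hy hΔ hΔu hΔg
  set L := l2 (Uhat.mulVec ghat - U.mulVec g)
  set C := √q * τg + 3 * √s * τu
  have hC : 0 ≤ C := by positivity
  have linear_upper :
      (n : ℝ)⁻¹ * l2 (Z *ᵥ (Uhat *ᵥ ghat - U *ᵥ g)) ^ 2 ≤ lam * C / 2 * L := by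
    calc _ ≤ lam / 2 * (√q * l2 (ghat - g) + 3 * √s * frob (Uhat - U)) :=
          prediction_error_le_of_l1_objective_le hS hlam.le hbasic hdev1 hdev2
      _ ≤ lam / 2 * (√q * (τg * L) + 3 * √s * (τu * L)) := by gcongr
      _ = lam * C / 2 * L := by ring
  obtain ⟨estimation, prediction⟩ := le_div_and_le_sq_div_of_mul_sq_le_of_le_mul (half_pos hα)
    (div_nonneg (mul_nonneg hlam.le hC) zero_le_two) (l2_nonneg _) hre linear_upper
  exact ⟨estimation.trans_eq (by field_simp), prediction.trans_eq (by field_simp)⟩
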